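/- Let X and A be finite nonempty sets, n ∈ ℕ, and let S_{x,a} ∈ Mₙ(ℂ) for x ∈ X, a ∈ A. Then the supremum of ‖Σ_{x∈X,a∈A} S_{x,a} ⊗ U_{a,x}‖, taken over all pairs of complex Hilbert spaces (H,K) and all block operator isometries U = (U_{a,x}) over (X,A) with entries in B(H,K) (the norm being that of an operator from ℂⁿ ⊗ H to ℂⁿ ⊗ K), equals the supremum of ‖Σ_{x∈X,a∈A} S_{x,a} ⊗ T_{a,x}‖, taken over all pairs of complex Hilbert spaces (H,K) and all families T = (T_{a,x}) of operators T_{a,x} ∈ B(H,K) whose block operator matrix, viewed as an operator from the X-fold direct sum of H to the A-fold direct sum of K, is a contraction. -/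

import Mathlib

open ContinuousLinearMap

universe u

/-- A bundled complex Hilbert space. -/
structure HilbertC : Type (u + 1) where
  carrier : Type u
  [nacg : NormedAddCommGroup carrier]
  [ips : InnerProductSpace ℂ carrier]
  [cs : CompleteSpace carrier]

attribute [instance] HilbertC.nacg HilbertC.ips HilbertC.cs

/-- The block operator `ι`-fold `H` → `κ`-fold `K` (Hilbert direct sums)
associated with a family `T : κ → ι → B(H,K)` of operators. -/
noncomputable def blockCLM {ι κ : Type*} [Fintype ι] [Fintype κ] [DecidableEq κ]
    {H K : Type*} [NormedAddCommGroup H] [InnerProductSpace ℂ H]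
    [NormedAddCommGroup K] [InnerProductSpace ℂ K]
    (T : κ → ι → (H →L[ℂ] K)) :
    PiLp 2 (fun _ : ι => H) →L[ℂ] PiLp 2 (fun _ : κ => K) :=
  ∑ a : κ, ∑ x : ι,
    ((PiLp.continuousLinearEquiv 2 ℂ (fun _ : κ => K)).symm.toContinuousLinearMap.comp
      ((ContinuousLinearMap.pi (fun b : κ =>
          if b = a then ContinuousLinearMap.id ℂ K else 0)).comp
        ((T a x).comp
          ((ContinuousLinearMap.proj x).comp
            (PiLp.continuousLinearEquiv 2 ℂ (fun _ : ι => H)).toContinuousLinearMap))))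

theorem blockCLM_apply' {ι κ : Type*} [Fintype ι] [Fintype κ] [DecidableEq κ]
    {H K : Type*} [NormedAddCommGroup H] [InnerProductSpace ℂ H]
    [NormedAddCommGroup K] [InnerProductSpace ℂ K]
    (T : κ → ι → (H →L[ℂ] K)) (f : PiLp 2 (fun _ : ι => H)) (b : κ) :
    blockCLM T f b = ∑ x, T b x (f x) := by
  have h : ∀ g : PiLp 2 (fun _ : κ => K), g b = PiLp.proj 2 (𝕜 := ℂ) (fun _ : κ => K) b g :=
    fun g => rfl
  unfold blockCLM
  rw [h]
  simp only [ContinuousLinearMap.sum_apply, map_sum]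
  rw [Finset.sum_eq_single b]
  · refine Finset.sum_congr rfl fun x _ => ?_
    simp
  · intro a _ hab
    refine Finset.sum_eq_zero fun x _ => ?_
    simp [hab.symm]
  · simp

theorem sSup_eq_of_cofinal' {s t : Set ℝ} (h1 : s ⊆ t) (h2 : ∀ r ∈ t, ∃ r' ∈ s, r ≤ r') :
    sSup s = sSup t := by
  by_cases hb : BddAbove t
  · rcases t.eq_empty_or_nonempty with rfl | hne
    · rw [Set.subset_empty_iff.1 h1]
    · obtain ⟨r, hr⟩ := hne
      obtain ⟨r', hr', _⟩ := h2 r hr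
      apply le_antisymm
      · exact csSup_le_csSup hb ⟨r', hr'⟩ h1
      · refine csSup_le ⟨r, hr⟩ fun q hq => ?_
        obtain ⟨q', hq', hle⟩ := h2 q hq
        exact hle.trans (le_csSup (hb.mono h1) hq')
  · have hs : ¬ BddAbove s := by
      rintro ⟨c, hc⟩
      refine hb ⟨c, fun q hq => ?_⟩
      obtain ⟨q', hq', hle⟩ := h2 q hq
      exact hle.trans (hc hq')
    rw [Real.sSup_of_not_bddAbove hb, Real.sSup_of_not_bddAbove hs]

theorem block_iso_norm_le {ι κ : Type*} [Fintype ι] [Fintype κ] [DecidableEq κ] [DecidableEq ι]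
    {H K : Type*} [NormedAddCommGroup H] [InnerProductSpace ℂ H] [CompleteSpace H]
    [NormedAddCommGroup K] [InnerProductSpace ℂ K] [CompleteSpace K]
    (U : κ → ι → (H →L[ℂ] K))
    (hU : ∀ x x' : ι, ∑ a : κ, (adjoint (U a x)) ∘L (U a x') = if x = x' then 1 else 0) :
    ‖blockCLM U‖ ≤ 1 := by
  refine ContinuousLinearMap.opNorm_le_bound _ zero_le_one fun f => ?_
  rw [one_mul]
  have key : inner ℂ (blockCLM U f) (blockCLM U f) = inner ℂ f f := by
    rw [PiLp.inner_apply, PiLp.inner_apply]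
    simp only [blockCLM_apply', inner_sum, sum_inner]
    rw [Finset.sum_comm]
    refine Finset.sum_congr rfl fun x' _ => ?_
    rw [Finset.sum_comm]
    have : ∀ x, ∑ a, inner ℂ (U a x (f x)) (U a x' (f x'))
        = inner ℂ (f x) ((if x = x' then (1 : H →L[ℂ] H) else 0) (f x')) := by
      intro x
      rw [← hU x x', ContinuousLinearMap.sum_apply, inner_sum]
      refine Finset.sum_congr rfl fun a _ => ?_
      rw [ContinuousLinearMap.comp_apply, ContinuousLinearMap.adjoint_inner_right]
    simp only [this]
    rw [Finset.sum_eq_single x']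
    · simp
    · intro b _ hb
      simp [hb]
    · simp
  rw [inner_self_eq_norm_sq_to_K, inner_self_eq_norm_sq_to_K] at key
  have k2 : ‖blockCLM U f‖ ^ 2 = ‖f‖ ^ 2 := by exact_mod_cast key
  exact le_of_eq ((sq_eq_sq₀ (norm_nonneg _) (norm_nonneg _)).1 k2)

theorem exists_defect {E F : Type*} [NormedAddCommGroup E] [InnerProductSpace ℂ E]
    [CompleteSpace E] [NormedAddCommGroup F] [InnerProductSpace ℂ F] [CompleteSpace F]
    (T : E →L[ℂ] F) (hT : ‖T‖ ≤ 1) :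
    ∃ D : E →L[ℂ] E, ∀ f g, inner ℂ (T f) (T g) + inner ℂ (D f) (D g) = inner ℂ f g := by
  have hpos : (0 : E →L[ℂ] E) ≤ 1 - adjoint T ∘L T := by
    rw [ContinuousLinearMap.nonneg_iff_isPositive]
    have hsa : IsSelfAdjoint (1 - adjoint T ∘L T) := by
      refine (IsSelfAdjoint.one _).sub ?_
      rw [ContinuousLinearMap.isSelfAdjoint_iff', ContinuousLinearMap.adjoint_comp,
        ContinuousLinearMap.adjoint_adjoint]
    rw [ContinuousLinearMap.isPositive_def']
    refine ⟨hsa, fun f => ?_⟩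
    have h1 : ‖T f‖ ≤ ‖f‖ := by
      simpa using T.le_of_opNorm_le hT f
    have h2 : ‖T f‖ ^ 2 ≤ ‖f‖ ^ 2 := by gcongr
    rw [ContinuousLinearMap.reApplyInnerSelf_apply, ContinuousLinearMap.sub_apply, inner_sub_left,
      ContinuousLinearMap.comp_apply, ContinuousLinearMap.adjoint_inner_left, map_sub,
      ContinuousLinearMap.one_apply, inner_self_eq_norm_sq, inner_self_eq_norm_sq]
    linarith
  obtain ⟨D, hD⟩ := CStarAlgebra.nonneg_iff_eq_star_mul_self.1 hpos
  refine ⟨D, fun f g => ?_⟩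
  have h3 : inner ℂ f ((1 - adjoint T ∘L T) g) = inner ℂ f ((star D * D) g) := by rw [hD]
  rw [ContinuousLinearMap.sub_apply, inner_sub_right, ContinuousLinearMap.comp_apply,
    ContinuousLinearMap.adjoint_inner_right, ContinuousLinearMap.one_apply,
    ContinuousLinearMap.mul_apply, ContinuousLinearMap.star_eq_adjoint,
    ContinuousLinearMap.adjoint_inner_right] at h3
  rw [← h3]; ring

theorem block_compress {κ : Type*} [Fintype κ] [DecidableEq κ]
    {H K L : Type*} [NormedAddCommGroup H] [InnerProductSpace ℂ H]
    [NormedAddCommGroup K] [InnerProductSpace ℂ K]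
    [NormedAddCommGroup L] [InnerProductSpace ℂ L]
    (P : L →L[ℂ] K) (hP : ∀ v, ‖P v‖ ≤ ‖v‖) (W : κ → κ → (H →L[ℂ] L)) :
    ‖blockCLM (fun i j => P ∘L W i j)‖ ≤ ‖blockCLM W‖ := by
  refine ContinuousLinearMap.opNorm_le_bound _ (ContinuousLinearMap.opNorm_nonneg _) fun f => ?_
  refine le_trans ?_ ((blockCLM W).le_opNorm f)
  rw [PiLp.norm_eq_of_L2, PiLp.norm_eq_of_L2]
  refine Real.sqrt_le_sqrt (Finset.sum_le_sum fun i _ => ?_)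
  have : blockCLM (fun i j => P ∘L W i j) f i = P (blockCLM W f i) := by
    simp [blockCLM_apply']
  rw [this]
  gcongr
  exact hP _

/-- The supremum of `‖Σ S_{x,a} ⊗ U_{a,x}‖` over all block operator
isometries `U` equals the supremum over all block operator contractions `T`. -/
theorem statement6
    {X A : Type} [Fintype X] [Fintype A] [Nonempty X] [Nonempty A]
    [DecidableEq X] [DecidableEq A]
    (n : ℕ) (S : X → A → Matrix (Fin n) (Fin n) ℂ) :
    sSup {r : ℝ | ∃ (ℍ 𝕂 : HilbertC.{u})
        (U : A → X → (ℍ.carrier →L[ℂ] 𝕂.carrier)),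
        (∀ x x' : X, ∑ a : A, (adjoint (U a x)) ∘L (U a x')
            = if x = x' then 1 else 0) ∧
        r = ‖blockCLM (fun (i : Fin n) (j : Fin n) =>
              ∑ x : X, ∑ a : A, (S x a i j) • U a x)‖}
    = sSup {r : ℝ | ∃ (ℍ 𝕂 : HilbertC.{u})
        (T : A → X → (ℍ.carrier →L[ℂ] 𝕂.carrier)),
        ‖blockCLM T‖ ≤ 1 ∧
        r = ‖blockCLM (fun (i : Fin n) (j : Fin n) =>
              ∑ x : X, ∑ a : A, (S x a i j) • T a x)‖} := by
  apply sSup_eq_of_cofinal'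
  · rintro r ⟨ℍ, 𝕂, U, hU, rfl⟩
    exact ⟨ℍ, 𝕂, U, block_iso_norm_le U hU, rfl⟩
  · rintro r ⟨ℍ, 𝕂, T, hT, rfl⟩
    obtain ⟨D, hD⟩ := exists_defect (blockCLM T) hT
    let a0 : A := Classical.arbitrary A
    let L := PiLp 2 (fun _ : X => ℍ.carrier)
    let inc : X → (ℍ.carrier →L[ℂ] L) := fun x =>
      (PiLp.continuousLinearEquiv 2 ℂ (fun _ : X => ℍ.carrier)).symm.toContinuousLinearMap.comp
        (ContinuousLinearMap.single ℂ (fun _ : X => ℍ.carrier) x)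
    have hinc : ∀ x h y, inc x h y = if y = x then h else 0 := by
      intro x h y
      simp [inc, Pi.single_apply]
    have hTinc : ∀ x h a, blockCLM T (inc x h) a = T a x h := by
      intro x h a
      rw [blockCLM_apply', Finset.sum_eq_single x]
      · rw [hinc, if_pos rfl]
      · intro b _ hb
        rw [hinc, if_neg hb, map_zero]
      · simp
    let V : A → X → (ℍ.carrier →L[ℂ] L) := fun a x => if a = a0 then D ∘L inc x else 0
    let 𝕂' : HilbertC := ⟨WithLp 2 (𝕂.carrier × L)⟩
    let U : A → X → (ℍ.carrier →L[ℂ] WithLp 2 (𝕂.carrier × L)) := fun a x =>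
      (WithLp.prodContinuousLinearEquiv 2 ℂ 𝕂.carrier L).symm.toContinuousLinearMap ∘L
        ((T a x).prod (V a x))
    have hUin : ∀ a x x' h h', inner ℂ (U a x h) (U a x' h') =
        inner ℂ (T a x h) (T a x' h') + inner ℂ (V a x h) (V a x' h') := by
      intro a x x' h h'
      rw [WithLp.prod_inner_apply]
      rfl
    let P : WithLp 2 (𝕂.carrier × L) →L[ℂ] 𝕂.carrier :=
      (ContinuousLinearMap.fst ℂ 𝕂.carrier L) ∘L
        (WithLp.prodContinuousLinearEquiv 2 ℂ 𝕂.carrier L).toContinuousLinearMap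
    have hP : ∀ v, ‖P v‖ ≤ ‖v‖ := fun v => WithLp.norm_fst_le _ v
    have hPU : ∀ a x, P ∘L U a x = T a x := fun a x => rfl
    refine ⟨_, ⟨ℍ, 𝕂', U, ?_, rfl⟩, ?_⟩
    · intro x x'
      refine ContinuousLinearMap.ext fun h' => ext_inner_left ℂ fun h => ?_
      rw [ContinuousLinearMap.sum_apply, inner_sum]
      have e1 : ∀ a, inner ℂ h ((adjoint (U a x) ∘L U a x') h') =
          inner ℂ (T a x h) (T a x' h') + inner ℂ (V a x h) (V a x' h') := by
        intro a
        rw [ContinuousLinearMap.comp_apply, ContinuousLinearMap.adjoint_inner_right, hUin]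
      refine (Finset.sum_congr rfl fun a _ => e1 a).trans ?_
      rw [Finset.sum_add_distrib]
      have e2 : ∑ a, inner ℂ (T a x h) (T a x' h') =
          inner ℂ (blockCLM T (inc x h)) (blockCLM T (inc x' h')) := by
        rw [PiLp.inner_apply]
        simp only [hTinc]
      have e3 : ∑ a, inner ℂ (V a x h) (V a x' h') =
          inner ℂ (D (inc x h)) (D (inc x' h')) := by
        rw [Finset.sum_eq_single a0]
        · simp [V]
        · intro b _ hb
          simp [V, hb]
        · simp
      rw [e2, e3, hD, PiLp.inner_apply]
      simp only [hinc]
      rw [Finset.sum_eq_single x]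
      · by_cases hx : x = x'
        · simp [hx]
        · simp [hx]
      · intro b _ hb
        simp [hb]
      · simp
    · have e : (fun i j : Fin n => ∑ x : X, ∑ a : A, (S x a i j) • T a x) =
          fun i j => P ∘L (∑ x : X, ∑ a : A, (S x a i j) • U a x) := by
        funext i j
        simp only [ContinuousLinearMap.comp_finset_sum, ContinuousLinearMap.comp_smul, hPU]
      rw [e]
      exact block_compress P hP _
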